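/- arXiv:2104.02680 — 3 statements merged into one kernel-verified Lean document; each statement's English description precedes it below -/
import Mathlib

section
/- Let 𝒞 be a finite collection of pairwise disjoint nonempty finite subsets of ℝ^d, let λ_g > 0, and let 𝒢 be a grouping of 𝒞 that minimizes the regularized set k-means energy E_g(𝒞,·,λ_g) over all groupings of 𝒞. Then for every group G ∈ 𝒢, the union U = ⋃_{C∈G} C satisfies Var(U) ≤ (1/|G|) Σ_{C∈G} [ λ_g/|C| + |C|·Var(C) ]. -/
/-! The energy of a minimizing grouping cannot drop when one of its groups `G` is replaced by the
singleton groups `{C}`, `C ∈ G`. Since a singleton group has energy `λ_g / |C|`, comparing the two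
energies and discarding the nonnegative term `λ_g / |G|` gives
`Σ_{C ∈ G} |C| ‖ḡ − c̄‖² ≤ Σ_{C ∈ G} λ_g / |C|` (`sum_dist_le_of_minimizer`).
On the other hand, the parallel axis identity (`sum_norm_sub_sq`), summed over the disjoint
clusters of `G`, decomposes the total variance as
`|G| Var(U) = Σ_{C ∈ G} (|C| Var(C) + |C| ‖ḡ − c̄‖²)`. The two together are the claim. -/

open scoped BigOperators Classical

/-- The centroid of a finite set of points in `ℝ^d`. -/
noncomputable def centroid {d : ℕ} (C : Finset (EuclideanSpace ℝ (Fin d))) :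
    EuclideanSpace ℝ (Fin d) :=
  (C.card : ℝ)⁻¹ • ∑ x ∈ C, x

/-- The variance of a finite set of points in `ℝ^d`. -/
noncomputable def clVar {d : ℕ} (C : Finset (EuclideanSpace ℝ (Fin d))) : ℝ :=
  (C.card : ℝ)⁻¹ * ∑ x ∈ C, ‖centroid C - x‖ ^ 2

/-- `𝒢` is a partition of `X` into nonempty clusters. -/
def IsPartition {d : ℕ} (X : Finset (EuclideanSpace ℝ (Fin d)))
    (𝒢 : Finset (Finset (EuclideanSpace ℝ (Fin d)))) : Prop :=
  (∀ C ∈ 𝒢, C.Nonempty) ∧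
  (∀ C ∈ 𝒢, ∀ D ∈ 𝒢, C ≠ D → Disjoint C D) ∧
  𝒢.biUnion id = X

/-- The regularized k-means energy of a partition `𝒢` with parameter `lam`:
`E(X,𝒢,λ) = λ Σ_i 1/|G_i| + Σ_i Σ_{x ∈ G_i} ‖ḡ_i − x‖²`. -/
noncomputable def energy {d : ℕ} (𝒢 : Finset (Finset (EuclideanSpace ℝ (Fin d))))
    (lam : ℝ) : ℝ :=
  lam * ∑ C ∈ 𝒢, (C.card : ℝ)⁻¹ + ∑ C ∈ 𝒢, ∑ x ∈ C, ‖centroid C - x‖ ^ 2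

/-- The size of a group of clusters: the total number of points in its clusters. -/
def groupSize {d : ℕ} (G : Finset (Finset (EuclideanSpace ℝ (Fin d)))) : ℕ :=
  ∑ C ∈ G, C.card

/-- The union of the clusters in a group. -/
noncomputable def groupUnion {d : ℕ} (G : Finset (Finset (EuclideanSpace ℝ (Fin d)))) :
    Finset (EuclideanSpace ℝ (Fin d)) :=
  G.biUnion id

/-- `𝒞` is a finite collection of pairwise disjoint nonempty clusters. -/
def IsClusterCollection {d : ℕ} (𝒞 : Finset (Finset (EuclideanSpace ℝ (Fin d)))) : Prop :=
  (∀ C ∈ 𝒞, C.Nonempty) ∧ (∀ C ∈ 𝒞, ∀ D ∈ 𝒞, C ≠ D → Disjoint C D)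

/-- `𝒢` is a grouping of `𝒞`: a partition of `𝒞` into nonempty groups. -/
def IsGrouping {d : ℕ} (𝒞 : Finset (Finset (EuclideanSpace ℝ (Fin d))))
    (𝒢 : Finset (Finset (Finset (EuclideanSpace ℝ (Fin d))))) : Prop :=
  (∀ G ∈ 𝒢, G.Nonempty) ∧
  (∀ G ∈ 𝒢, ∀ H ∈ 𝒢, G ≠ H → Disjoint G H) ∧
  𝒢.biUnion id = 𝒞

/-- The regularized set k-means (grouping) energy:
`E_g(𝒞,𝒢,λ_g) = λ_g Σ_G 1/|G| + Σ_G Σ_{C ∈ G} |C| ‖ḡ − c̄‖²`. -/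
noncomputable def groupEnergy {d : ℕ}
    (𝒢 : Finset (Finset (Finset (EuclideanSpace ℝ (Fin d))))) (lam : ℝ) : ℝ :=
  lam * ∑ G ∈ 𝒢, (groupSize G : ℝ)⁻¹ +
    ∑ G ∈ 𝒢, ∑ C ∈ G, (C.card : ℝ) * ‖centroid (groupUnion G) - centroid C‖ ^ 2

/-- Parallel axis identity: the second moment of `C` about any point `p`. -/
lemma sum_norm_sub_sq {d : ℕ} (C : Finset (EuclideanSpace ℝ (Fin d))) (hC : C.Nonempty)
    (p : EuclideanSpace ℝ (Fin d)) :
    ∑ x ∈ C, ‖p - x‖ ^ 2 =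
      (C.card : ℝ) * clVar C + (C.card : ℝ) * ‖p - centroid C‖ ^ 2 := by
  have hc : (C.card : ℝ) ≠ 0 := by exact_mod_cast hC.card_pos.ne'
  have h0 : ∑ x ∈ C, (centroid C - x) = 0 := by
    rw [Finset.sum_sub_distrib, Finset.sum_const, ← Nat.cast_smul_eq_nsmul ℝ, centroid,
      smul_smul, mul_inv_cancel₀ hc, one_smul, sub_self]
  have hx : ∀ x ∈ C, ‖p - x‖ ^ 2 = ‖p - centroid C‖ ^ 2 +
      2 * inner ℝ (p - centroid C) (centroid C - x) + ‖centroid C - x‖ ^ 2 := by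
    intro x _
    rw [← norm_add_sq_real, sub_add_sub_cancel]
  rw [Finset.sum_congr rfl hx, Finset.sum_add_distrib, Finset.sum_add_distrib,
    ← Finset.mul_sum, ← inner_sum, h0, inner_zero_right, Finset.sum_const, nsmul_eq_mul,
    clVar, mul_inv_cancel_left₀ hc]
  ring

/-- The contribution of a single group to the grouping energy. -/
noncomputable def groupTerm {d : ℕ} (lam : ℝ)
    (G : Finset (Finset (EuclideanSpace ℝ (Fin d)))) : ℝ :=
  lam * (groupSize G : ℝ)⁻¹ +
    ∑ C ∈ G, (C.card : ℝ) * ‖centroid (groupUnion G) - centroid C‖ ^ 2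

lemma groupEnergy_eq_sum_groupTerm {d : ℕ}
    (𝒢 : Finset (Finset (Finset (EuclideanSpace ℝ (Fin d))))) (lam : ℝ) :
    groupEnergy 𝒢 lam = ∑ G ∈ 𝒢, groupTerm lam G := by
  simp only [groupEnergy, groupTerm, Finset.sum_add_distrib, Finset.mul_sum]

lemma groupTerm_singleton {d : ℕ} (lam : ℝ) (C : Finset (EuclideanSpace ℝ (Fin d))) :
    groupTerm lam {C} = lam / (C.card : ℝ) := by
  simp [groupTerm, groupSize, groupUnion, div_eq_mul_inv]

/-- Splitting the group `G` into singletons yields a grouping of the same collection. -/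
lemma isGrouping_split {d : ℕ} {𝒞 : Finset (Finset (EuclideanSpace ℝ (Fin d)))}
    {𝒢 : Finset (Finset (Finset (EuclideanSpace ℝ (Fin d))))} (h : IsGrouping 𝒞 𝒢)
    {G : Finset (Finset (EuclideanSpace ℝ (Fin d)))} (hG : G ∈ 𝒢) :
    IsGrouping 𝒞 (𝒢.erase G ∪ G.image singleton) := by
  obtain ⟨hne, hdis, hun⟩ := h
  have key : ∀ H ∈ 𝒢.erase G, ∀ C ∈ G, C ∉ H := by
    intro H hH C hC hCH
    rw [Finset.mem_erase] at hH
    exact Finset.disjoint_left.1 (hdis H hH.2 G hG hH.1) hCH hC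
  refine ⟨?_, ?_, ?_⟩
  · intro H hH
    rcases Finset.mem_union.1 hH with hH | hH
    · exact hne H (Finset.mem_of_mem_erase hH)
    · obtain ⟨C, -, rfl⟩ := Finset.mem_image.1 hH
      exact Finset.singleton_nonempty C
  · intro H hH K hK hHK
    rcases Finset.mem_union.1 hH with hH | hH <;> rcases Finset.mem_union.1 hK with hK | hK
    · exact hdis H (Finset.mem_of_mem_erase hH) K (Finset.mem_of_mem_erase hK) hHK
    · obtain ⟨C, hC, rfl⟩ := Finset.mem_image.1 hK
      exact Finset.disjoint_singleton_right.2 (key H hH C hC)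
    · obtain ⟨C, hC, rfl⟩ := Finset.mem_image.1 hH
      exact Finset.disjoint_singleton_left.2 (key K hK C hC)
    · obtain ⟨C, -, rfl⟩ := Finset.mem_image.1 hH
      obtain ⟨D, -, rfl⟩ := Finset.mem_image.1 hK
      exact Finset.disjoint_singleton.2 fun e => hHK (by rw [e])
  · have himg : (G.image singleton).biUnion id = G := by
      ext C
      simp
    rw [Finset.union_biUnion, himg, ← hun, ← Finset.insert_erase hG, Finset.biUnion_insert,
      Finset.erase_insert (Finset.notMem_erase G 𝒢), id, Finset.union_comm]

/-- Energy comparison between a minimizer and the grouping that splits `G` into singletons. -/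
lemma sum_dist_le_of_minimizer {d : ℕ} {𝒞 : Finset (Finset (EuclideanSpace ℝ (Fin d)))}
    {lam : ℝ} (hlam : 0 < lam)
    {𝒢 : Finset (Finset (Finset (EuclideanSpace ℝ (Fin d))))} (h : IsGrouping 𝒞 𝒢)
    (hmin : ∀ 𝒢' : Finset (Finset (Finset (EuclideanSpace ℝ (Fin d)))),
      IsGrouping 𝒞 𝒢' → groupEnergy 𝒢 lam ≤ groupEnergy 𝒢' lam)
    {G : Finset (Finset (EuclideanSpace ℝ (Fin d)))} (hG : G ∈ 𝒢) :
    ∑ C ∈ G, (C.card : ℝ) * ‖centroid (groupUnion G) - centroid C‖ ^ 2 ≤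
      ∑ C ∈ G, lam / (C.card : ℝ) := by
  have hle := hmin _ (isGrouping_split h hG)
  -- A singleton `{C}` with `C ∈ G` meets `G`, so it can only be a group of `𝒢` by being `G`.
  have hdis : Disjoint (𝒢.erase G) (G.image singleton) := by
    rw [Finset.disjoint_left]
    intro H hH hH'
    obtain ⟨C, hC, rfl⟩ := Finset.mem_image.1 hH'
    rw [Finset.mem_erase] at hH
    exact Finset.disjoint_left.1 (h.2.1 _ hH.2 G hG hH.1) (Finset.mem_singleton_self C) hC
  rw [groupEnergy_eq_sum_groupTerm, groupEnergy_eq_sum_groupTerm, Finset.sum_union hdis,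
    ← Finset.sum_erase_add _ _ hG, Finset.sum_image (fun _ _ _ _ e => Finset.singleton_injective e),
    Finset.sum_congr rfl (fun C _ => groupTerm_singleton lam C)] at hle
  have hpos : 0 ≤ lam * (groupSize G : ℝ)⁻¹ := by positivity
  rw [groupTerm] at hle
  linarith

/-- Lemma 4.4: for a minimizing grouping, the variance of the union of each group `G`
is bounded by `(1/|G|) Σ_{C ∈ G} [λ_g/|C| + |C|·Var(C)]`. -/
theorem stmt3 {d : ℕ} (𝒞 : Finset (Finset (EuclideanSpace ℝ (Fin d))))
    (h𝒞 : IsClusterCollection 𝒞) (lamg : ℝ) (hlam : 0 < lamg)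
    (𝒢 : Finset (Finset (Finset (EuclideanSpace ℝ (Fin d)))))
    (hgrp : IsGrouping 𝒞 𝒢)
    (hmin : ∀ 𝒢' : Finset (Finset (Finset (EuclideanSpace ℝ (Fin d)))),
      IsGrouping 𝒞 𝒢' → groupEnergy 𝒢 lamg ≤ groupEnergy 𝒢' lamg) :
    ∀ G ∈ 𝒢,
      clVar (groupUnion G) ≤
        (groupSize G : ℝ)⁻¹ *
          ∑ C ∈ G, (lamg / (C.card : ℝ) + (C.card : ℝ) * clVar C) := by
  intro G hG
  have hsub : G ⊆ 𝒞 := by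
    rw [← hgrp.2.2]
    exact Finset.subset_biUnion_of_mem id hG
  have hdis : (G : Set (Finset (EuclideanSpace ℝ (Fin d)))).PairwiseDisjoint id :=
    fun C hC D hD hCD => h𝒞.2 C (hsub hC) D (hsub hD) hCD
  have hcard : (groupUnion G).card = groupSize G := Finset.card_biUnion hdis
  have hsum : ∑ x ∈ groupUnion G, ‖centroid (groupUnion G) - x‖ ^ 2 =
      ∑ C ∈ G, ((C.card : ℝ) * clVar C +
        (C.card : ℝ) * ‖centroid (groupUnion G) - centroid C‖ ^ 2) := by
    conv_lhs => rw [groupUnion, Finset.sum_biUnion hdis, ← groupUnion]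
    exact Finset.sum_congr rfl fun C hC => sum_norm_sub_sq C (h𝒞.1 C (hsub hC)) _
  rw [clVar, hcard, hsum]
  refine mul_le_mul_of_nonneg_left ?_ (by positivity)
  rw [Finset.sum_add_distrib, Finset.sum_add_distrib]
  linarith [sum_dist_le_of_minimizer hlam hgrp hmin hG]
end

section
/- Let X ⊂ ℝ^d be a finite set partitioned into subsets X_1, …, X_n, let λ_c > 0 and λ_g > 0. For each p, let 𝒞_p be a partition of X_p into nonempty clusters minimizing the regularized k-means energy E(X_p,·,λ_c), and let 𝒞 = ⋃_{p=1}^n 𝒞_p. Let 𝒢 be a grouping of 𝒞 minimizing the regularized set k-means energy E_g(𝒞,·,λ_g). Then every group G ∈ 𝒢 satisfies Var(⋃_{C∈G} C) ≤ λ_c + (λ_g/|G|) Σ_{C∈G} 1/|C|. -/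
/-!
Both regularized energies are sums, over the blocks of a partition, of a function of the block.
Breaking a single block into singletons therefore changes the energy only locally, and
minimality bounds the energy of that block by the total energy of its singletons
(`exists_split_block`). Singletons have no within-block scatter, so

* a cluster `C` of an optimal partition satisfies
  `λ_c / |C| + ∑_{x ∈ C} ‖c̄ - x‖² ≤ λ_c |C|`;
* a group `G` of an optimal grouping satisfies
  `λ_g / |G| + ∑_{C ∈ G} |C| ‖ḡ - c̄‖² ≤ λ_g ∑_{C ∈ G} 1 / |C|`.

The parallel axis identity (`sum_sq_dist_eq`) splits `|G| Var(⋃ G)` into the scatter of the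
cluster centroids about `ḡ` plus the scatter inside the clusters. The second estimate bounds the
former, the first one, summed over `C ∈ G`, bounds the latter by `λ_c |G|`.
-/

open scoped BigOperators Classical

/-- Replacing one block `G` of a partition `P` of `S` by the singletons of its elements gives a
partition again, and alters every block-additive functional only by the contribution of `G`. -/
lemma exists_split_block {α : Type*} [DecidableEq α] {S : Finset α} {P : Finset (Finset α)}
    (hne : ∀ C ∈ P, C.Nonempty) (hdisj : ∀ C ∈ P, ∀ D ∈ P, C ≠ D → Disjoint C D)
    (hU : P.biUnion id = S) {G : Finset α} (hG : G ∈ P) :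
    ∃ P' : Finset (Finset α), (∀ C ∈ P', C.Nonempty) ∧
      (∀ C ∈ P', ∀ D ∈ P', C ≠ D → Disjoint C D) ∧ P'.biUnion id = S ∧
      ∀ f : Finset α → ℝ, ∑ C ∈ P', f C + f G = ∑ C ∈ P, f C + ∑ x ∈ G, f {x} := by
  have hout : ∀ C ∈ P.erase G, ∀ x ∈ G, x ∉ C := fun C hC x hx hxC =>
    Finset.disjoint_left.1
      (hdisj C (Finset.mem_of_mem_erase hC) G hG (Finset.ne_of_mem_erase hC)) hxC hx
  refine ⟨P.erase G ∪ G.image (fun x => {x}), ?_, ?_, ?_, ?_⟩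
  · intro C hC
    rcases Finset.mem_union.1 hC with hC | hC
    · exact hne C (Finset.mem_of_mem_erase hC)
    · obtain ⟨x, -, rfl⟩ := Finset.mem_image.1 hC
      exact Finset.singleton_nonempty x
  · intro C hC D hD hCD
    rcases Finset.mem_union.1 hC with hC | hC <;> rcases Finset.mem_union.1 hD with hD | hD
    · exact hdisj C (Finset.mem_of_mem_erase hC) D (Finset.mem_of_mem_erase hD) hCD
    · obtain ⟨x, hx, rfl⟩ := Finset.mem_image.1 hD
      exact Finset.disjoint_singleton_right.2 (hout C hC x hx)
    · obtain ⟨x, hx, rfl⟩ := Finset.mem_image.1 hC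
      exact Finset.disjoint_singleton_left.2 (hout D hD x hx)
    · obtain ⟨x, -, rfl⟩ := Finset.mem_image.1 hC
      obtain ⟨y, -, rfl⟩ := Finset.mem_image.1 hD
      exact Finset.disjoint_singleton.2 fun h => hCD (by rw [h])
  · rw [← hU, ← Finset.insert_erase hG, Finset.erase_insert (Finset.notMem_erase G P),
      Finset.biUnion_insert, Finset.union_biUnion, Finset.union_comm]
    congr 1
    ext x
    simp
  · intro f
    have hd : Disjoint (P.erase G) (G.image (fun x => ({x} : Finset α))) := by
      rw [Finset.disjoint_left]
      intro C hC hC'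
      obtain ⟨x, hx, rfl⟩ := Finset.mem_image.1 hC'
      exact hout _ hC x hx (Finset.mem_singleton_self x)
    rw [Finset.sum_union hd, Finset.sum_image (fun x _ y _ h => Finset.singleton_injective h),
      ← Finset.sum_erase_add P f hG]
    ring

lemma centroid_singleton' {d : ℕ} (x : EuclideanSpace ℝ (Fin d)) : centroid {x} = x := by
  simp [centroid]

/-- The parallel axis identity. -/
lemma sum_sq_dist_eq {d : ℕ} (C : Finset (EuclideanSpace ℝ (Fin d)))
    (a : EuclideanSpace ℝ (Fin d)) :
    ∑ x ∈ C, ‖a - x‖ ^ 2 =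
      (C.card : ℝ) * ‖a - centroid C‖ ^ 2 + ∑ x ∈ C, ‖centroid C - x‖ ^ 2 := by
  rcases C.eq_empty_or_nonempty with rfl | hC
  · simp
  have hc : (C.card : ℝ) ≠ 0 := by exact_mod_cast hC.card_pos.ne'
  have h0 : ∑ x ∈ C, (centroid C - x) = 0 := by
    rw [Finset.sum_sub_distrib, Finset.sum_const, ← Nat.cast_smul_eq_nsmul ℝ, centroid,
      smul_smul, mul_inv_cancel₀ hc, one_smul, sub_self]
  have hx : ∀ x ∈ C, ‖a - x‖ ^ 2 = ‖a - centroid C‖ ^ 2 +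
      2 * inner ℝ (a - centroid C) (centroid C - x) + ‖centroid C - x‖ ^ 2 := by
    intro x _
    rw [← norm_add_sq_real, sub_add_sub_cancel]
  rw [Finset.sum_congr rfl hx, Finset.sum_add_distrib, Finset.sum_add_distrib, ← Finset.mul_sum,
    ← inner_sum, h0, inner_zero_right, Finset.sum_const, nsmul_eq_mul]
  ring

/-- In an optimal partition, a cluster costs no more than its points taken as singletons. -/
lemma cluster_bound {d : ℕ} {X : Finset (EuclideanSpace ℝ (Fin d))}
    {P : Finset (Finset (EuclideanSpace ℝ (Fin d)))} {lam : ℝ} (hP : IsPartition X P)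
    (hmin : ∀ P', IsPartition X P' → energy P lam ≤ energy P' lam)
    {C : Finset (EuclideanSpace ℝ (Fin d))} (hC : C ∈ P) :
    lam * (C.card : ℝ)⁻¹ + ∑ x ∈ C, ‖centroid C - x‖ ^ 2 ≤ lam * C.card := by
  obtain ⟨P', h1, h2, h3, hf⟩ := exists_split_block hP.1 hP.2.1 hP.2.2 hC
  have hle := hmin P' ⟨h1, h2, h3⟩
  have := hf fun C => lam * (C.card : ℝ)⁻¹ + ∑ x ∈ C, ‖centroid C - x‖ ^ 2
  simp only [Finset.sum_add_distrib, ← Finset.mul_sum, Finset.sum_singleton,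
    Finset.card_singleton, centroid_singleton', sub_self, norm_zero, Nat.cast_one, inv_one,
    Finset.sum_const, nsmul_eq_mul] at this
  simp only [energy] at hle
  linarith

/-- In an optimal grouping, a group costs no more than its clusters taken as separate groups. -/
lemma group_bound {d : ℕ} {𝒞 : Finset (Finset (EuclideanSpace ℝ (Fin d)))}
    {𝒢 : Finset (Finset (Finset (EuclideanSpace ℝ (Fin d))))} {lam : ℝ} (h𝒢 : IsGrouping 𝒞 𝒢)
    (hmin : ∀ 𝒢', IsGrouping 𝒞 𝒢' → groupEnergy 𝒢 lam ≤ groupEnergy 𝒢' lam)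
    {G : Finset (Finset (EuclideanSpace ℝ (Fin d)))} (hG : G ∈ 𝒢) :
    lam * (groupSize G : ℝ)⁻¹ +
        ∑ C ∈ G, (C.card : ℝ) * ‖centroid (groupUnion G) - centroid C‖ ^ 2 ≤
      lam * ∑ C ∈ G, (C.card : ℝ)⁻¹ := by
  obtain ⟨P', h1, h2, h3, hf⟩ := exists_split_block h𝒢.1 h𝒢.2.1 h𝒢.2.2 hG
  have hle := hmin P' ⟨h1, h2, h3⟩
  have hs : ∀ C : Finset (EuclideanSpace ℝ (Fin d)), groupSize {C} = C.card := fun C => by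
    simp [groupSize]
  have hu : ∀ C : Finset (EuclideanSpace ℝ (Fin d)), groupUnion {C} = C := fun C => by
    simp [groupUnion]
  have := hf fun G => lam * (groupSize G : ℝ)⁻¹ +
    ∑ C ∈ G, (C.card : ℝ) * ‖centroid (groupUnion G) - centroid C‖ ^ 2
  simp only [Finset.sum_add_distrib, ← Finset.mul_sum, Finset.sum_singleton, hs, hu, sub_self,
    norm_zero, ne_eq, OfNat.ofNat_ne_zero, not_false_eq_true, zero_pow, mul_zero,
    add_zero] at this
  simp only [groupEnergy] at hle
  linarith

/-- Theorem 4.5: if each `𝒞_p` is a minimizing regularized k-means partition of `X_p`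
(with parameter `λ_c`) and `𝒢` is a minimizing grouping of `𝒞 = ⋃_p 𝒞_p` (with
parameter `λ_g`), then every group `G ∈ 𝒢` satisfies
`Var(⋃_{C∈G} C) ≤ λ_c + (λ_g/|G|) Σ_{C∈G} 1/|C|`. -/
theorem stmt5 {d n : ℕ} (X : Finset (EuclideanSpace ℝ (Fin d)))
    (Xp : Fin n → Finset (EuclideanSpace ℝ (Fin d)))
    (hXdisj : ∀ p q, p ≠ q → Disjoint (Xp p) (Xp q))
    (hXcover : Finset.univ.biUnion Xp = X)
    (lamc lamg : ℝ) (hlamc : 0 < lamc) (hlamg : 0 < lamg)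
    (𝒞p : Fin n → Finset (Finset (EuclideanSpace ℝ (Fin d))))
    (hpart : ∀ p, IsPartition (Xp p) (𝒞p p))
    (hminp : ∀ p, ∀ 𝒞' : Finset (Finset (EuclideanSpace ℝ (Fin d))),
      IsPartition (Xp p) 𝒞' → energy (𝒞p p) lamc ≤ energy 𝒞' lamc)
    (𝒞 : Finset (Finset (EuclideanSpace ℝ (Fin d))))
    (h𝒞 : 𝒞 = Finset.univ.biUnion 𝒞p)
    (𝒢 : Finset (Finset (Finset (EuclideanSpace ℝ (Fin d)))))
    (hgrp : IsGrouping 𝒞 𝒢)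
    (hmin : ∀ 𝒢' : Finset (Finset (Finset (EuclideanSpace ℝ (Fin d)))),
      IsGrouping 𝒞 𝒢' → groupEnergy 𝒢 lamg ≤ groupEnergy 𝒢' lamg) :
    ∀ G ∈ 𝒢,
      clVar (groupUnion G) ≤
        lamc + lamg / (groupSize G : ℝ) * ∑ C ∈ G, (C.card : ℝ)⁻¹ := by
  intro G hG
  have hsub : ∀ C ∈ G, ∃ p, C ∈ 𝒞p p := by
    intro C hC
    have h : C ∈ 𝒞 := hgrp.2.2 ▸ Finset.mem_biUnion.2 ⟨G, hG, hC⟩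
    rw [h𝒞] at h
    simpa using h
  have hXsub : ∀ p, ∀ C ∈ 𝒞p p, C ⊆ Xp p := fun p C hC =>
    (hpart p).2.2 ▸ Finset.subset_biUnion_of_mem id hC
  have hdisj : (G : Set (Finset (EuclideanSpace ℝ (Fin d)))).PairwiseDisjoint id := by
    intro C hC D hD hCD
    obtain ⟨p, hp⟩ := hsub C hC
    obtain ⟨q, hq⟩ := hsub D hD
    by_cases hpq : p = q
    · subst hpq
      exact (hpart p).2.1 C hp D hq hCD
    · exact (hXdisj p q hpq).mono (hXsub p C hp) (hXsub q D hq)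
  have hcard : (groupUnion G).card = groupSize G := Finset.card_biUnion hdisj
  have hpos : 0 < (groupSize G : ℝ) := by
    obtain ⟨C, hC⟩ := hgrp.1 G hG
    obtain ⟨p, hp⟩ := hsub C hC
    obtain ⟨x, hx⟩ := (hpart p).1 C hp
    have : (groupUnion G).Nonempty := ⟨x, Finset.mem_biUnion.2 ⟨C, hC, hx⟩⟩
    rw [← hcard]
    exact_mod_cast this.card_pos
  have hdecomp : ∑ x ∈ groupUnion G, ‖centroid (groupUnion G) - x‖ ^ 2 =
      ∑ C ∈ G, (C.card : ℝ) * ‖centroid (groupUnion G) - centroid C‖ ^ 2 +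
        ∑ C ∈ G, ∑ x ∈ C, ‖centroid C - x‖ ^ 2 := by
    rw [← Finset.sum_add_distrib]
    conv_lhs => rw [show groupUnion G = G.biUnion id from rfl]
    rw [Finset.sum_biUnion hdisj]
    exact Finset.sum_congr rfl fun C _ => sum_sq_dist_eq C _
  have hinner : ∑ C ∈ G, ∑ x ∈ C, ‖centroid C - x‖ ^ 2 ≤ lamc * groupSize G := by
    rw [groupSize, Nat.cast_sum, Finset.mul_sum]
    refine Finset.sum_le_sum fun C hC => ?_
    obtain ⟨p, hp⟩ := hsub C hC
    have h1 := cluster_bound (hpart p) (hminp p) hp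
    have h2 : 0 ≤ lamc * (C.card : ℝ)⁻¹ := by positivity
    linarith
  have houter := group_bound hgrp hmin hG
  have h2 : 0 ≤ lamg * (groupSize G : ℝ)⁻¹ := by positivity
  have hrhs : lamc + lamg / (groupSize G : ℝ) * ∑ C ∈ G, (C.card : ℝ)⁻¹ =
      (groupSize G : ℝ)⁻¹ * (lamg * ∑ C ∈ G, (C.card : ℝ)⁻¹ + lamc * groupSize G) := by
    field_simp
    ring
  rw [clVar, hcard, hdecomp, hrhs]
  gcongr
  linarith
end

section
/- Let 𝒞 be a finite collection of pairwise disjoint nonempty finite subsets of ℝ^d, λ_g > 0, and let 𝒢 be a grouping of 𝒞. Let C ∈ G_i ∈ 𝒢 where G_i contains at least one cluster other than C, and let G_j ∈ 𝒢 be a different group. Let 𝒢' be the grouping obtained from 𝒢 by reassigning C from G_i to G_j. Then E_g(𝒞,𝒢',λ_g) − E_g(𝒞,𝒢,λ_g) = λ_g|C|/(|G_i|(|G_i|−|C|)) − λ_g|C|/(|G_j|(|G_j|+|C|)) + (|G_j|·|C|/(|G_j|+|C|)) ‖ḡ_j − c̄‖² − (|G_i|·|C|/(|G_i|−|C|)) ‖ḡ_i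 − c̄‖², where c̄ is the centroid of C and ḡ_i, ḡ_j are the centroids of the unions of the clusters in G_i, G_j respectively (before the reassignment). -/
open scoped BigOperators Classical

/-!
Write `W(G) = Σ_{D ∈ G} |D| ‖ḡ − d̄‖²` for the inertia of a group `G`. Since `|G| ḡ = Σ_{D ∈ G} |D| d̄`,
the parallel axis identity gives `W(G) = Σ_{D ∈ G} |D| ‖d̄‖² − |G| ‖ḡ‖²`
(`groupInertia_eq`). Adding a cluster `C` to `G` replaces `ḡ` by the weighted mean of `ḡ` and `c̄`,
so `W` grows by `|G||C| / (|G| + |C|) · ‖ḡ − c̄‖²` (`groupInertia_insert`).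

A reassignment changes only two groups. The receiving group `G_j` gains `C`, and this formula applies
directly. For the losing group the formula is applied to `G_i ∖ {C}`, and the distance is then
expressed through `ḡ_i` using `|G_i| (ḡ_i − c̄) = (|G_i| − |C|) (ḡ − c̄)`, where `ḡ` is the centroid
of `G_i ∖ {C}` (`norm_centroid_insert_sub`).
-/

/-- The second term of the grouping energy, for a single group: the weighted sum of squared
distances from the cluster centroids to the group centroid. -/
noncomputable def groupInertia {d : ℕ} (G : Finset (Finset (EuclideanSpace ℝ (Fin d)))) : ℝ :=
  ∑ C ∈ G, (C.card : ℝ) * ‖centroid (groupUnion G) - centroid C‖ ^ 2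

lemma card_smul_centroid {d : ℕ} (C : Finset (EuclideanSpace ℝ (Fin d))) :
    (C.card : ℝ) • centroid C = ∑ x ∈ C, x := by
  rcases C.eq_empty_or_nonempty with rfl | h
  · simp
  · have : (C.card : ℝ) ≠ 0 := by exact_mod_cast h.card_pos.ne'
    rw [centroid, smul_inv_smul₀ this]

lemma IsClusterCollection.mono {d : ℕ} {G H : Finset (Finset (EuclideanSpace ℝ (Fin d)))}
    (hH : IsClusterCollection H) (h : G ⊆ H) : IsClusterCollection G :=
  ⟨fun C hC => hH.1 C (h hC), fun C hC D hD => hH.2 C (h hC) D (h hD)⟩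

lemma groupSize_pos {d : ℕ} {G : Finset (Finset (EuclideanSpace ℝ (Fin d)))}
    (hG : IsClusterCollection G) (hne : G.Nonempty) : 0 < groupSize G :=
  Finset.sum_pos (fun C hC => (hG.1 C hC).card_pos) hne

lemma groupSize_insert {d : ℕ} {G : Finset (Finset (EuclideanSpace ℝ (Fin d)))}
    {C : Finset (EuclideanSpace ℝ (Fin d))} (hC : C ∉ G) :
    (groupSize (insert C G) : ℝ) = groupSize G + C.card := by
  rw [groupSize, Finset.sum_insert hC, groupSize]
  push_cast
  ring

lemma groupSize_smul_centroid {d : ℕ} {G : Finset (Finset (EuclideanSpace ℝ (Fin d)))}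
    (hG : IsClusterCollection G) :
    (groupSize G : ℝ) • centroid (groupUnion G) = ∑ C ∈ G, (C.card : ℝ) • centroid C := by
  have hd : (G : Set (Finset (EuclideanSpace ℝ (Fin d)))).PairwiseDisjoint id :=
    fun C hC D hD h => hG.2 C hC D hD h
  have hcard : groupSize G = (groupUnion G).card := by
    rw [groupUnion, Finset.card_biUnion hd]
    rfl
  rw [hcard, card_smul_centroid, groupUnion, Finset.sum_biUnion hd]
  exact Finset.sum_congr rfl fun C _ => (card_smul_centroid C).symm

/-- Parallel axis identity for a group. -/
lemma groupInertia_eq {d : ℕ} {G : Finset (Finset (EuclideanSpace ℝ (Fin d)))}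
    (hG : IsClusterCollection G) :
    groupInertia G = ∑ C ∈ G, (C.card : ℝ) * ‖centroid C‖ ^ 2 -
      (groupSize G : ℝ) * ‖centroid (groupUnion G)‖ ^ 2 := by
  have hs := groupSize_smul_centroid hG
  set g := centroid (groupUnion G)
  have h1 : (groupSize G : ℝ) * ‖g‖ ^ 2 = ∑ C ∈ G, (C.card : ℝ) * inner ℝ g (centroid C) := by
    have := congrArg (fun v => inner ℝ g v) hs
    simpa [inner_sum, inner_smul_right] using this
  have h2 : (groupSize G : ℝ) * ‖g‖ ^ 2 = ∑ C ∈ G, (C.card : ℝ) * ‖g‖ ^ 2 := by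
    rw [← Finset.sum_mul, groupSize]
    push_cast
    rfl
  have h3 : groupInertia G = ∑ C ∈ G, (C.card : ℝ) * ‖g‖ ^ 2 -
      2 * ∑ C ∈ G, (C.card : ℝ) * inner ℝ g (centroid C) +
      ∑ C ∈ G, (C.card : ℝ) * ‖centroid C‖ ^ 2 := by
    rw [groupInertia, Finset.mul_sum, ← Finset.sum_sub_distrib, ← Finset.sum_add_distrib]
    refine Finset.sum_congr rfl fun C _ => ?_
    rw [norm_sub_sq_real]
    ring
  linarith

/-- The centroid of an enlarged group is the weighted mean of the old one and the centroid of the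
added cluster. -/
lemma groupSize_smul_centroid_insert {d : ℕ} {G : Finset (Finset (EuclideanSpace ℝ (Fin d)))}
    {C : Finset (EuclideanSpace ℝ (Fin d))} (hG : IsClusterCollection (insert C G)) (hC : C ∉ G) :
    ((groupSize G : ℝ) + C.card) • centroid (groupUnion (insert C G)) =
      (groupSize G : ℝ) • centroid (groupUnion G) + (C.card : ℝ) • centroid C := by
  rw [← groupSize_insert hC, groupSize_smul_centroid hG, Finset.sum_insert hC,
    groupSize_smul_centroid (hG.mono (Finset.subset_insert C G)), add_comm]

lemma groupInertia_insert {d : ℕ} {G : Finset (Finset (EuclideanSpace ℝ (Fin d)))}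
    {C : Finset (EuclideanSpace ℝ (Fin d))} (hG : IsClusterCollection (insert C G)) (hC : C ∉ G) :
    groupInertia (insert C G) = groupInertia G +
      (groupSize G : ℝ) * C.card / (groupSize G + C.card) *
        ‖centroid (groupUnion G) - centroid C‖ ^ 2 := by
  have hn : (0 : ℝ) < C.card := by
    exact_mod_cast (hG.1 C (Finset.mem_insert_self C G)).card_pos
  have hs := groupSize_smul_centroid_insert hG hC
  rw [groupInertia_eq hG, groupInertia_eq (hG.mono (Finset.subset_insert C G)),
    Finset.sum_insert hC, groupSize_insert hC]
  set g := centroid (groupUnion G)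
  set g' := centroid (groupUnion (insert C G))
  set c := centroid C
  set N := (groupSize G : ℝ)
  set n := (C.card : ℝ)
  have hNn : 0 < N + n := add_pos_of_nonneg_of_pos (Nat.cast_nonneg _) hn
  have h : (N + n) ^ 2 * ‖g'‖ ^ 2 = N ^ 2 * ‖g‖ ^ 2 + 2 * N * n * inner ℝ g c + n ^ 2 * ‖c‖ ^ 2 := by
    have := congrArg (fun v => ‖v‖ ^ 2) hs
    simp only [norm_add_sq_real, norm_smul, mul_pow, Real.norm_eq_abs, sq_abs, inner_smul_left,
      inner_smul_right, conj_trivial] at this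
    linarith
  have h' : (N + n) * ‖g'‖ ^ 2 =
      (N ^ 2 * ‖g‖ ^ 2 + 2 * N * n * inner ℝ g c + n ^ 2 * ‖c‖ ^ 2) / (N + n) := by
    rw [← h]
    field_simp
  rw [h', norm_sub_sq_real]
  field_simp
  ring

lemma norm_centroid_insert_sub {d : ℕ} {G : Finset (Finset (EuclideanSpace ℝ (Fin d)))}
    {C : Finset (EuclideanSpace ℝ (Fin d))} (hG : IsClusterCollection (insert C G)) (hC : C ∉ G) :
    ((groupSize G : ℝ) + C.card) ^ 2 * ‖centroid (groupUnion (insert C G)) - centroid C‖ ^ 2 =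
      (groupSize G : ℝ) ^ 2 * ‖centroid (groupUnion G) - centroid C‖ ^ 2 := by
  have h : ((groupSize G : ℝ) + C.card) • (centroid (groupUnion (insert C G)) - centroid C) =
      (groupSize G : ℝ) • (centroid (groupUnion G) - centroid C) := by
    rw [smul_sub, groupSize_smul_centroid_insert hG hC, add_smul, smul_sub]
    abel
  have h' := congrArg (fun v => ‖v‖ ^ 2) h
  simp only [norm_smul, Real.norm_eq_abs] at h'
  rwa [mul_pow, mul_pow, sq_abs, sq_abs] at h'

lemma sum_reassign {d : ℕ} {𝒞 : Finset (Finset (EuclideanSpace ℝ (Fin d)))}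
    {𝒢 : Finset (Finset (Finset (EuclideanSpace ℝ (Fin d))))} (hgrp : IsGrouping 𝒞 𝒢)
    {Gi Gj : Finset (Finset (EuclideanSpace ℝ (Fin d)))}
    (hGi : Gi ∈ 𝒢) (hGj : Gj ∈ 𝒢) (hij : Gi ≠ Gj)
    {C : Finset (EuclideanSpace ℝ (Fin d))} (hC : C ∈ Gi) (hother : ∃ C' ∈ Gi, C' ≠ C)
    (f : Finset (Finset (EuclideanSpace ℝ (Fin d))) → ℝ) :
    ∑ G ∈ insert (Gi.erase C) (insert (insert C Gj) ((𝒢.erase Gi).erase Gj)), f G -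
      ∑ G ∈ 𝒢, f G = f (Gi.erase C) - f Gi + (f (insert C Gj) - f Gj) := by
  -- A group sharing a cluster with `Gi` is `Gi`; hence neither modified group is already present.
  have huniq : ∀ H ∈ 𝒢, ∀ D ∈ Gi, D ∈ H → H = Gi := by
    intro H hH D hD hDH
    by_contra hne
    exact Finset.disjoint_left.mp (hgrp.2.1 H hH Gi hGi hne) hDH hD
  have h1 : insert C Gj ∉ (𝒢.erase Gi).erase Gj := by
    intro h
    have h2 := Finset.mem_erase.mp (Finset.mem_of_mem_erase h)
    exact h2.1 (huniq _ h2.2 C hC (Finset.mem_insert_self C Gj))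
  have h2 : Gi.erase C ∉ insert (insert C Gj) ((𝒢.erase Gi).erase Gj) := by
    intro h
    rcases Finset.mem_insert.mp h with h | h
    · exact Finset.notMem_erase C Gi (h ▸ Finset.mem_insert_self C Gj)
    · obtain ⟨D, hD, hDC⟩ := hother
      have h3 := Finset.mem_erase.mp (Finset.mem_of_mem_erase h)
      exact h3.1 (huniq _ h3.2 D hD (Finset.mem_erase.mpr ⟨hDC, hD⟩))
  rw [Finset.sum_insert h2, Finset.sum_insert h1, ← Finset.add_sum_erase 𝒢 f hGi,
    ← Finset.add_sum_erase (𝒢.erase Gi) f (Finset.mem_erase.mpr ⟨hij.symm, hGj⟩)]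
  ring

/-- Equation (5): the change in grouping energy caused by reassigning a cluster `C` from
its group `G_i` (which contains at least one other cluster) to a different group `G_j`. -/
theorem stmt8 {d : ℕ} (𝒞 : Finset (Finset (EuclideanSpace ℝ (Fin d))))
    (h𝒞 : IsClusterCollection 𝒞) (lamg : ℝ) (hlam : 0 < lamg)
    (𝒢 : Finset (Finset (Finset (EuclideanSpace ℝ (Fin d)))))
    (hgrp : IsGrouping 𝒞 𝒢)
    (Gi Gj : Finset (Finset (EuclideanSpace ℝ (Fin d))))
    (hGi : Gi ∈ 𝒢) (hGj : Gj ∈ 𝒢) (hij : Gi ≠ Gj)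
    (C : Finset (EuclideanSpace ℝ (Fin d))) (hC : C ∈ Gi)
    (hother : ∃ C' ∈ Gi, C' ≠ C)
    (𝒢' : Finset (Finset (Finset (EuclideanSpace ℝ (Fin d)))))
    (h𝒢' : 𝒢' = insert (Gi.erase C) (insert (insert C Gj) ((𝒢.erase Gi).erase Gj))) :
    groupEnergy 𝒢' lamg - groupEnergy 𝒢 lamg =
      lamg * (C.card : ℝ) / ((groupSize Gi : ℝ) * ((groupSize Gi : ℝ) - (C.card : ℝ))) -
        lamg * (C.card : ℝ) / ((groupSize Gj : ℝ) * ((groupSize Gj : ℝ) + (C.card : ℝ))) +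
        (groupSize Gj : ℝ) * (C.card : ℝ) / ((groupSize Gj : ℝ) + (C.card : ℝ)) *
          ‖centroid (groupUnion Gj) - centroid C‖ ^ 2 -
        (groupSize Gi : ℝ) * (C.card : ℝ) / ((groupSize Gi : ℝ) - (C.card : ℝ)) *
          ‖centroid (groupUnion Gi) - centroid C‖ ^ 2 := by
  have hsub : ∀ G ∈ 𝒢, G ⊆ 𝒞 := fun G hG => hgrp.2.2 ▸ Finset.subset_biUnion_of_mem id hG
  have hCj : C ∉ Gj := Finset.disjoint_left.mp (hgrp.2.1 Gi hGi Gj hGj hij) hC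
  have hcj : IsClusterCollection (insert C Gj) :=
    h𝒞.mono (Finset.insert_subset (hsub Gi hGi hC) (hsub Gj hGj))
  have hsum := sum_reassign hgrp hGi hGj hij hC hother
  -- The losing group is `insert C H`, where `H` is what remains of it.
  obtain ⟨H, hH⟩ : ∃ H, H = Gi.erase C := ⟨_, rfl⟩
  have hCH : C ∉ H := hH ▸ Finset.notMem_erase C Gi
  have hGiH : insert C H = Gi := by rw [hH, Finset.insert_erase hC]
  have hci : IsClusterCollection (insert C H) := hGiH ▸ h𝒞.mono (hsub Gi hGi)
  have hHne : H.Nonempty := by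
    obtain ⟨D, hD, hDC⟩ := hother
    exact ⟨D, hH ▸ Finset.mem_erase.mpr ⟨hDC, hD⟩⟩
  have hn : (0 : ℝ) < C.card := by exact_mod_cast (h𝒞.1 C (hsub Gi hGi hC)).card_pos
  have hM : (0 : ℝ) < groupSize H := by
    exact_mod_cast groupSize_pos (hci.mono (Finset.subset_insert C H)) hHne
  have hN : (0 : ℝ) < groupSize Gj := by
    exact_mod_cast groupSize_pos (hcj.mono (Finset.subset_insert C Gj)) (hgrp.1 Gj hGj)
  have hsize := hsum fun G => (groupSize G : ℝ)⁻¹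
  have hinertia := hsum groupInertia
  rw [← h𝒢', ← hH, ← hGiH] at hsize hinertia
  simp only [groupSize_insert hCH, groupSize_insert hCj] at hsize
  rw [groupInertia_insert hci hCH, groupInertia_insert hcj hCj] at hinertia
  have hdist := norm_centroid_insert_sub hci hCH
  have hE : groupEnergy 𝒢' lamg - groupEnergy 𝒢 lamg =
      lamg * (∑ G ∈ 𝒢', (groupSize G : ℝ)⁻¹ - ∑ G ∈ 𝒢, (groupSize G : ℝ)⁻¹) +
        (∑ G ∈ 𝒢', groupInertia G - ∑ G ∈ 𝒢, groupInertia G) := by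
    simp only [groupEnergy, groupInertia]
    ring
  rw [hE, hsize, hinertia, ← hGiH, groupSize_insert hCH]
  generalize ‖centroid (groupUnion (insert C H)) - centroid C‖ ^ 2 = a at *
  generalize ‖centroid (groupUnion H) - centroid C‖ ^ 2 = b at *
  generalize ‖centroid (groupUnion Gj) - centroid C‖ ^ 2 = e at *
  generalize (groupSize H : ℝ) = M at *
  generalize (groupSize Gj : ℝ) = N at *
  generalize (C.card : ℝ) = n at *
  have hb : b = (M + n) ^ 2 * a / M ^ 2 := by
    rw [hdist]
    field_simp
  rw [hb, add_sub_cancel_right]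
  field_simp
  ring
end
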